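/- Let (▷,σ) be a cocycle datum for a Hopf algebra H on an algebra B, let χ : H⊗H → k be a Drinfeld 2-cocycle with twisted product h•g := χ(h_{(1)},g_{(1)}) h_{(2)}g_{(2)} χ⁻¹(h_{(3)},g_{(3)}), and let u : H → B be convolution invertible with u(1) = 1. Then cotwisting and gauge transformation commute: for all h,g ∈ H, σ^u(h_{(1)},g_{(1)})χ⁻¹(h_{(2)},g_{(2)}) = u⁻¹(h_{(1)})(h_{(2)}▷u⁻¹(g_{(1)}))·σ(h_{(3)},g_{(2)})χ⁻¹(h_{(4)},g_{(3)})·u(h_{(5)}•g_{(4)}), where σ^u(h,g) := u⁻¹(h_{(1)})(h_{(2)}▷u⁻¹(g_{(1)}))σ(h_{(3)},g_{(2)})u(h_{(4)}g_{(3)}). -/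

import Mathlib

/-!
Convolving bilinear maps on `H`, the twisted product is `χ * m * χ⁻¹`, where `m` is the product of
`H`. Hence `χ⁻¹ * (u ∘ •) = χ⁻¹ * χ * (u ∘ m) * χ⁻¹ = (u ∘ m) * χ⁻¹`, by coassociativity and the
convolution invertibility of `χ` (`smulConv_inv_cancel`, `smulConv_twisted`). Multiplying this
identity on the left by `u⁻¹(h₍₁₎)(h₍₂₎▷u⁻¹(g₍₁₎))σ(h₍₃₎,g₍₂₎)` gives the theorem: the last two legs
of `Δ5 h` and of `Δ4 g` are the coproduct of the last leg of `Δ4 h`, respectively of `Δ3 g`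
(`assoc_Δ5`, `assoc_Δ4`).
-/

open scoped TensorProduct
open Coalgebra

noncomputable section

section SweedlerDefs

variable (k : Type*) [Field k]
variable (H : Type*) [Ring H] [Bialgebra k H]

/-- Left-nested triple comultiplication `h ↦ (h₍₁₎ ⊗ h₍₂₎) ⊗ h₍₃₎`. -/
def Δ3 : H →ₗ[k] (H ⊗[k] H) ⊗[k] H :=
  (LinearMap.rTensor H (Coalgebra.comul (R := k) (A := H))) ∘ₗ Coalgebra.comul

/-- Left-nested fourfold comultiplication. -/
def Δ4 : H →ₗ[k] ((H ⊗[k] H) ⊗[k] H) ⊗[k] H :=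
  (LinearMap.rTensor H (Δ3 k H)) ∘ₗ Coalgebra.comul

/-- Left-nested fivefold comultiplication. -/
def Δ5 : H →ₗ[k] (((H ⊗[k] H) ⊗[k] H) ⊗[k] H) ⊗[k] H :=
  (LinearMap.rTensor H (Δ4 k H)) ∘ₗ Coalgebra.comul

/-- Left-nested sixfold comultiplication. -/
def Δ6 : H →ₗ[k] ((((H ⊗[k] H) ⊗[k] H) ⊗[k] H) ⊗[k] H) ⊗[k] H :=
  (LinearMap.rTensor H (Δ5 k H)) ∘ₗ Coalgebra.comul

/-- `IsRep2 k H h h1 h2` says that `Δh = ∑ᵢ h1 i ⊗ h2 i`, i.e. the families `h1, h2`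
realise the Sweedler legs `h₍₁₎ ⊗ h₍₂₎`. -/
def IsRep2 {n : ℕ} (h : H) (h1 h2 : Fin n → H) : Prop :=
  Coalgebra.comul (R := k) h = ∑ i, h1 i ⊗ₜ[k] h2 i

/-- A representation of the Sweedler legs `h₍₁₎ ⊗ h₍₂₎ ⊗ h₍₃₎`. -/
def IsRep3 {n : ℕ} (h : H) (h1 h2 h3 : Fin n → H) : Prop :=
  Δ3 k H h = ∑ i, (h1 i ⊗ₜ[k] h2 i) ⊗ₜ[k] h3 i

/-- A representation of the Sweedler legs `h₍₁₎ ⊗ h₍₂₎ ⊗ h₍₃₎ ⊗ h₍₄₎`. -/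
def IsRep4 {n : ℕ} (h : H) (h1 h2 h3 h4 : Fin n → H) : Prop :=
  Δ4 k H h = ∑ i, ((h1 i ⊗ₜ[k] h2 i) ⊗ₜ[k] h3 i) ⊗ₜ[k] h4 i

/-- A representation of the Sweedler legs `h₍₁₎ ⊗ ⋯ ⊗ h₍₅₎`. -/
def IsRep5 {n : ℕ} (h : H) (h1 h2 h3 h4 h5 : Fin n → H) : Prop :=
  Δ5 k H h = ∑ i, (((h1 i ⊗ₜ[k] h2 i) ⊗ₜ[k] h3 i) ⊗ₜ[k] h4 i) ⊗ₜ[k] h5 i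

/-- A representation of the Sweedler legs `h₍₁₎ ⊗ ⋯ ⊗ h₍₆₎`. -/
def IsRep6 {n : ℕ} (h : H) (h1 h2 h3 h4 h5 h6 : Fin n → H) : Prop :=
  Δ6 k H h = ∑ i, ((((h1 i ⊗ₜ[k] h2 i) ⊗ₜ[k] h3 i) ⊗ₜ[k] h4 i) ⊗ₜ[k] h5 i) ⊗ₜ[k] h6 i

/-- A Drinfeld 2-cocycle `χ : H ⊗ H → k` with convolution inverse `χi`. -/
structure DrinfeldCocycle (χ χi : H →ₗ[k] H →ₗ[k] k) : Prop where
  conv_left : ∀ (h g : H) {n m : ℕ} (h1 h2 : Fin n → H) (g1 g2 : Fin m → H),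
    IsRep2 k H h h1 h2 → IsRep2 k H g g1 g2 →
    ∑ i, ∑ j, χ (h1 i) (g1 j) * χi (h2 i) (g2 j)
      = Coalgebra.counit (R := k) h * Coalgebra.counit (R := k) g
  conv_right : ∀ (h g : H) {n m : ℕ} (h1 h2 : Fin n → H) (g1 g2 : Fin m → H),
    IsRep2 k H h h1 h2 → IsRep2 k H g g1 g2 →
    ∑ i, ∑ j, χi (h1 i) (g1 j) * χ (h2 i) (g2 j)
      = Coalgebra.counit (R := k) h * Coalgebra.counit (R := k) g
  cocycle : ∀ (h g f : H) {n m p : ℕ} (h1 h2 : Fin n → H) (g1 g2 : Fin m → H)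
      (f1 f2 : Fin p → H),
    IsRep2 k H h h1 h2 → IsRep2 k H g g1 g2 → IsRep2 k H f f1 f2 →
    ∑ j, ∑ l, χ (g1 j) (f1 l) * χ h (g2 j * f2 l)
      = ∑ i, ∑ j, χ (h1 i) (g1 j) * χ (h2 i * g2 j) f
  one_cocy : ∀ h : H, χ 1 h = Coalgebra.counit (R := k) h
  cocy_one : ∀ h : H, χ h 1 = Coalgebra.counit (R := k) h

/-- The twisted product `h • g = χ(h₍₁₎,g₍₁₎) h₍₂₎g₍₂₎ χ⁻¹(h₍₃₎,g₍₃₎)` of the Drinfeld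
cotwist `H^χ`, given as a bilinear map `tmul`. -/
def IsTwistedMul (χ χi : H →ₗ[k] H →ₗ[k] k) (tmul : H →ₗ[k] H →ₗ[k] H) : Prop :=
  ∀ (h g : H) {n m : ℕ} (h1 h2 h3 : Fin n → H) (g1 g2 g3 : Fin m → H),
    IsRep3 k H h h1 h2 h3 → IsRep3 k H g g1 g2 g3 →
    tmul h g = ∑ i, ∑ j, (χ (h1 i) (g1 j) * χi (h3 i) (g3 j)) • (h2 i * g2 j)

/-- A coquasitriangular structure `r` on `H`, with convolution inverse `ri`. -/
structure Coquasitriangular (r ri : H →ₗ[k] H →ₗ[k] k) : Prop where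
  conv_left : ∀ (h g : H) {n m : ℕ} (h1 h2 : Fin n → H) (g1 g2 : Fin m → H),
    IsRep2 k H h h1 h2 → IsRep2 k H g g1 g2 →
    ∑ i, ∑ j, r (h1 i) (g1 j) * ri (h2 i) (g2 j)
      = Coalgebra.counit (R := k) h * Coalgebra.counit (R := k) g
  conv_right : ∀ (h g : H) {n m : ℕ} (h1 h2 : Fin n → H) (g1 g2 : Fin m → H),
    IsRep2 k H h h1 h2 → IsRep2 k H g g1 g2 →
    ∑ i, ∑ j, ri (h1 i) (g1 j) * r (h2 i) (g2 j)
      = Coalgebra.counit (R := k) h * Coalgebra.counit (R := k) g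
  braid : ∀ (h g : H) {n m : ℕ} (h1 h2 : Fin n → H) (g1 g2 : Fin m → H),
    IsRep2 k H h h1 h2 → IsRep2 k H g g1 g2 →
    ∑ i, ∑ j, r (h2 i) (g2 j) • (g1 j * h1 i) = ∑ i, ∑ j, r (h1 i) (g1 j) • (h2 i * g2 j)
  mul_right : ∀ (h g f : H) {n : ℕ} (h1 h2 : Fin n → H), IsRep2 k H h h1 h2 →
    r h (g * f) = ∑ i, r (h1 i) g * r (h2 i) f
  mul_left : ∀ (h g f : H) {n : ℕ} (f1 f2 : Fin n → H), IsRep2 k H f f1 f2 →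
    r (h * g) f = ∑ i, r h (f1 i) * r g (f2 i)

variable (B : Type*) [Ring B] [Algebra k B]

/-- `u, ui : H → B` are convolution inverses of each other. -/
def ConvInv (u ui : H →ₗ[k] B) : Prop :=
  ∀ (h : H) {n : ℕ} (h1 h2 : Fin n → H), IsRep2 k H h h1 h2 →
    ∑ i, u (h1 i) * ui (h2 i) = Coalgebra.counit (R := k) h • (1 : B)
    ∧ ∑ i, ui (h1 i) * u (h2 i) = Coalgebra.counit (R := k) h • (1 : B)

/-- A measuring of `H` on `B`:  `h ▷ (ab) = (h₍₁₎ ▷ a)(h₍₂₎ ▷ b)` and `h ▷ 1 = ε(h)1`. -/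
structure Measuring (act : H →ₗ[k] B →ₗ[k] B) : Prop where
  act_mul : ∀ (h : H) (a b : B) {n : ℕ} (h1 h2 : Fin n → H),
    IsRep2 k H h h1 h2 → act h (a * b) = ∑ i, act (h1 i) a * act (h2 i) b
  act_one : ∀ h : H, act h 1 = Coalgebra.counit (R := k) h • (1 : B)

/-- A cocycle datum `(▷, σ)` (with chosen convolution inverse `σi` of `σ`). -/
structure CocycleDatum (act : H →ₗ[k] B →ₗ[k] B) (σ σi : H →ₗ[k] H →ₗ[k] B) : Prop where
  toMeasuring : Measuring k H B act
  conv_left : ∀ (h g : H) {n m : ℕ} (h1 h2 : Fin n → H) (g1 g2 : Fin m → H),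
    IsRep2 k H h h1 h2 → IsRep2 k H g g1 g2 →
    ∑ i, ∑ j, σ (h1 i) (g1 j) * σi (h2 i) (g2 j)
      = (Coalgebra.counit (R := k) h * Coalgebra.counit (R := k) g) • (1 : B)
  conv_right : ∀ (h g : H) {n m : ℕ} (h1 h2 : Fin n → H) (g1 g2 : Fin m → H),
    IsRep2 k H h h1 h2 → IsRep2 k H g g1 g2 →
    ∑ i, ∑ j, σi (h1 i) (g1 j) * σ (h2 i) (g2 j)
      = (Coalgebra.counit (R := k) h * Coalgebra.counit (R := k) g) • (1 : B)
  one_act : ∀ b : B, act 1 b = b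
  act_act : ∀ (h g : H) (b : B) {n m : ℕ} (h1 h2 h3 : Fin n → H) (g1 g2 g3 : Fin m → H),
    IsRep3 k H h h1 h2 h3 → IsRep3 k H g g1 g2 g3 →
    act h (act g b) = ∑ i, ∑ j, σ (h1 i) (g1 j) * act (h2 i * g2 j) b * σi (h3 i) (g3 j)
  sigma_one : ∀ h : H, σ h 1 = Coalgebra.counit (R := k) h • (1 : B)
  one_sigma : ∀ h : H, σ 1 h = Coalgebra.counit (R := k) h • (1 : B)
  cocycle : ∀ (h g f : H) {n m p : ℕ} (h1 h2 : Fin n → H) (g1 g2 : Fin m → H)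
      (f1 f2 : Fin p → H),
    IsRep2 k H h h1 h2 → IsRep2 k H g g1 g2 → IsRep2 k H f f1 f2 →
    ∑ i, ∑ j, ∑ l, act (h1 i) (σ (g1 j) (f1 l)) * σ (h2 i) (g2 j * f2 l)
      = ∑ i, ∑ j, σ (h1 i) (g1 j) * σ (h2 i * g2 j) f

/-- The cocycle cross product multiplication on `P = B ⊗ H`:
`(b#h)(c#g) = b(h₍₁₎▷c)σ(h₍₂₎,g₍₁₎) # h₍₃₎g₍₂₎`, given as a bilinear map `mult`. -/
def IsCrossMul (act : H →ₗ[k] B →ₗ[k] B) (σ : H →ₗ[k] H →ₗ[k] B)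
    (mult : B ⊗[k] H →ₗ[k] B ⊗[k] H →ₗ[k] B ⊗[k] H) : Prop :=
  ∀ (b c : B) (h g : H) {n m : ℕ} (h1 h2 h3 : Fin n → H) (g1 g2 : Fin m → H),
    IsRep3 k H h h1 h2 h3 → IsRep2 k H g g1 g2 →
    mult (b ⊗ₜ[k] h) (c ⊗ₜ[k] g)
      = ∑ i, ∑ j, (b * act (h1 i) c * σ (h2 i) (g1 j)) ⊗ₜ[k] (h3 i * g2 j)

end SweedlerDefs

section HopfDefs

variable (k : Type*) [Field k]
variable (H : Type*) [Ring H] [HopfAlgebra k H]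
variable (B : Type*) [Ring B] [Algebra k B]

/-- The cocycle Hopf algebroid multiplication on `B ⊗ B ⊗ H`:
`(b⊗b'⊗h)(c⊗c'⊗g) = b(h₍₁₎▷c)σ(h₍₂₎,g₍₁₎) ⊗ c'(S(g₍₄₎)▷b')σ(S(g₍₃₎),S(h₍₄₎)) ⊗ h₍₃₎g₍₂₎`,
given as a bilinear map `mult`. -/
def IsAlgebroidMul (act : H →ₗ[k] B →ₗ[k] B) (σ : H →ₗ[k] H →ₗ[k] B)
    (mult : B ⊗[k] (B ⊗[k] H) →ₗ[k] B ⊗[k] (B ⊗[k] H) →ₗ[k] B ⊗[k] (B ⊗[k] H)) : Prop :=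
  ∀ (b b' c c' : B) (h g : H) {n m : ℕ}
    (h1 h2 h3 h4 : Fin n → H) (g1 g2 g3 g4 : Fin m → H),
    IsRep4 k H h h1 h2 h3 h4 → IsRep4 k H g g1 g2 g3 g4 →
    mult (b ⊗ₜ[k] (b' ⊗ₜ[k] h)) (c ⊗ₜ[k] (c' ⊗ₜ[k] g))
      = ∑ i, ∑ j, (b * act (h1 i) c * σ (h2 i) (g1 j)) ⊗ₜ[k]
          ((c' * act (HopfAlgebra.antipode (R := k) (g4 j)) b'
              * σ (HopfAlgebra.antipode (R := k) (g3 j))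
                  (HopfAlgebra.antipode (R := k) (h4 i))) ⊗ₜ[k] (h3 i * g2 j))

end HopfDefs

section Helpers

variable {k : Type*} [Field k]
variable {H : Type*} [Ring H] [Bialgebra k H]
variable {V W : Type*} [AddCommGroup V] [Module k V] [AddCommGroup W] [Module k W]
variable {M N P Q : Type*} [AddCommGroup M] [Module k M] [AddCommGroup N] [Module k N]
  [AddCommGroup P] [Module k P] [AddCommGroup Q] [Module k Q]

/-- The bilinear map `(m ⊗ n, p ⊗ q) ↦ f(m, p) • e(n, q)`. -/
def smulPair (f : M →ₗ[k] P →ₗ[k] k) (e : N →ₗ[k] Q →ₗ[k] V) :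
    M ⊗[k] N →ₗ[k] P ⊗[k] Q →ₗ[k] V :=
  (TensorProduct.map₂ f e).compr₂ (TensorProduct.lift (LinearMap.lsmul k V))

@[simp] lemma smulPair_tmul (f : M →ₗ[k] P →ₗ[k] k) (e : N →ₗ[k] Q →ₗ[k] V)
    (m : M) (n : N) (p : P) (q : Q) :
    smulPair f e (m ⊗ₜ n) (p ⊗ₜ q) = f m p • e n q := by
  simp [smulPair]

/-- The bilinear map `(m ⊗ n, p ⊗ q) ↦ f(n, q) • e(m, p)`. -/
def smulPairRight (e : M →ₗ[k] P →ₗ[k] V) (f : N →ₗ[k] Q →ₗ[k] k) :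
    M ⊗[k] N →ₗ[k] P ⊗[k] Q →ₗ[k] V :=
  (TensorProduct.map₂ e f).compr₂ (TensorProduct.lift (LinearMap.lsmul k V).flip)

@[simp] lemma smulPairRight_tmul (e : M →ₗ[k] P →ₗ[k] V) (f : N →ₗ[k] Q →ₗ[k] k)
    (m : M) (n : N) (p : P) (q : Q) :
    smulPairRight e f (m ⊗ₜ n) (p ⊗ₜ q) = f n q • e m p := by
  simp [smulPairRight]

/-- The convolution `(f * e)(x, y) = f(x₍₁₎, y₍₁₎) • e(x₍₂₎, y₍₂₎)` of bilinear maps on `H`, with the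
scalar-valued factor on the left. -/
def smulConv (f : H →ₗ[k] H →ₗ[k] k) (e : H →ₗ[k] H →ₗ[k] V) : H →ₗ[k] H →ₗ[k] V :=
  (smulPair f e).compl₁₂ comul comul

/-- The convolution `(e * f)(x, y) = f(x₍₂₎, y₍₂₎) • e(x₍₁₎, y₍₁₎)` of bilinear maps on `H`, with the
scalar-valued factor on the right. -/
def smulConvRight (e : H →ₗ[k] H →ₗ[k] V) (f : H →ₗ[k] H →ₗ[k] k) : H →ₗ[k] H →ₗ[k] V :=
  (smulPairRight e f).compl₁₂ comul comul

lemma smulConv_compr₂ (f : H →ₗ[k] H →ₗ[k] k) (e : H →ₗ[k] H →ₗ[k] V) (w : V →ₗ[k] W) :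
    (smulConv f e).compr₂ w = smulConv f (e.compr₂ w) := by
  have h : (smulPair f e).compr₂ w = smulPair f (e.compr₂ w) := by
    ext; simp
  ext x y
  exact congr($h (comul x) (comul y))

lemma smulConvRight_compr₂ (e : H →ₗ[k] H →ₗ[k] V) (f : H →ₗ[k] H →ₗ[k] k) (w : V →ₗ[k] W) :
    (smulConvRight e f).compr₂ w = smulConvRight (e.compr₂ w) f := by
  have h : (smulPairRight e f).compr₂ w = smulPairRight (e.compr₂ w) f := by
    ext; simp
  ext x y
  exact congr($h (comul x) (comul y))

lemma smulConv_assoc (f f' : H →ₗ[k] H →ₗ[k] k) (e : H →ₗ[k] H →ₗ[k] V) :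
    smulConv f (smulConv f' e) = smulConv (smulConv f f') e := by
  have h1 : smulPair f (smulConv f' e) = (smulPair f (smulPair f' e)).compl₁₂
      (comul.lTensor H) (comul.lTensor H) := by
    ext; simp [smulConv]
  have h2 : smulPair (smulConv f f') e = (smulPair (smulPair f f') e).compl₁₂
      (comul.rTensor H) (comul.rTensor H) := by
    ext; simp [smulConv]
  have h3 : (smulPair f (smulPair f' e)).compl₁₂
      (TensorProduct.assoc k H H H).toLinearMap (TensorProduct.assoc k H H H).toLinearMap
      = smulPair (smulPair f f') e := by
    ext; simp [mul_smul]
  ext x y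
  simp only [smulConv, LinearMap.compl₁₂_apply]
  have e1 := congr($h1 (comul x) (comul y))
  have e2 := congr($h2 (comul x) (comul y))
  have e3 := congr($h3 (comul.rTensor H (comul x)) (comul.rTensor H (comul y)))
  simp only [smulConv, LinearMap.compl₁₂_apply, LinearEquiv.coe_coe, coassoc_apply] at e1 e2 e3
  rw [e1, e2, e3]

lemma smulConv_counit (e : H →ₗ[k] H →ₗ[k] V) :
    smulConv ((LinearMap.mul k k).compl₁₂ counit counit) e = e := by
  have h : smulPair ((LinearMap.mul k k).compl₁₂ (counit (A := H)) (counit (A := H))) e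
      = (smulPair (LinearMap.mul k k) e).compl₁₂ (counit.rTensor H) (counit.rTensor H) := by
    ext; simp
  ext x y
  have e1 := congr($h (comul x) (comul y))
  simp only [LinearMap.compl₁₂_apply, rTensor_counit_comul, smulPair_tmul] at e1
  simpa [smulConv] using e1

variable (k) in
lemma exists_isRep2 (x : H) : ∃ (n : ℕ) (x1 x2 : Fin n → H), IsRep2 k H x x1 x2 :=
  TensorProduct.exists_sum_tmul_eq _

variable (k) in
lemma exists_isRep3 (x : H) : ∃ (n : ℕ) (x1 x2 x3 : Fin n → H), IsRep3 k H x x1 x2 x3 := by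
  have key : ∀ t : (H ⊗[k] H) ⊗[k] H,
      t ∈ Submodule.span k (Set.range fun p : H × H × H => (p.1 ⊗ₜ[k] p.2.1) ⊗ₜ[k] p.2.2) := by
    intro t
    induction t with
    | zero => exact zero_mem _
    | add a b ha hb => exact add_mem ha hb
    | tmul s c =>
      induction s with
      | zero => simp
      | add a b ha hb => rw [TensorProduct.add_tmul]; exact add_mem ha hb
      | tmul a b => exact Submodule.subset_span ⟨(a, b, c), rfl⟩
  obtain ⟨n, f, g, hfg⟩ := Submodule.mem_span_set'.mp (key (Δ3 k H x))
  choose p hp using fun i => (g i).2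
  refine ⟨n, fun i => f i • (p i).1, fun i => (p i).2.1, fun i => (p i).2.2, ?_⟩
  rw [IsRep3, ← hfg]
  refine Finset.sum_congr rfl fun i _ => ?_
  rw [← hp i]
  simp [TensorProduct.smul_tmul']

lemma DrinfeldCocycle.smulConv_inv {χ χi : H →ₗ[k] H →ₗ[k] k} (hχ : DrinfeldCocycle k H χ χi) :
    smulConv χi χ = (LinearMap.mul k k).compl₁₂ counit counit := by
  ext x y
  obtain ⟨n, x1, x2, hx⟩ := exists_isRep2 k x
  obtain ⟨m, y1, y2, hy⟩ := exists_isRep2 k y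
  have e := hχ.conv_right x y x1 x2 y1 y2 hx hy
  rw [IsRep2] at hx hy
  simpa [smulConv, hx, hy, Finset.sum_comm (γ := Fin m)] using e

/-- Left convolution with `χ⁻¹` undoes left convolution with `χ`. -/
lemma DrinfeldCocycle.smulConv_inv_cancel {χ χi : H →ₗ[k] H →ₗ[k] k}
    (hχ : DrinfeldCocycle k H χ χi) (e : H →ₗ[k] H →ₗ[k] V) :
    smulConv χi (smulConv χ e) = e := by
  rw [smulConv_assoc, hχ.smulConv_inv, smulConv_counit]

lemma IsTwistedMul.eq_smulConv {χ χi : H →ₗ[k] H →ₗ[k] k} {tmul : H →ₗ[k] H →ₗ[k] H}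
    (ht : IsTwistedMul k H χ χi tmul) :
    tmul = smulConv χ (smulConvRight (LinearMap.mul k H) χi) := by
  have h1 : smulPair χ (smulConvRight (LinearMap.mul k H) χi)
      = (smulPair χ (smulPairRight (LinearMap.mul k H) χi)).compl₁₂
        (comul.lTensor H) (comul.lTensor H) := by
    ext; simp [smulConvRight]
  ext x y
  obtain ⟨n, x1, x2, x3, hx⟩ := exists_isRep3 k x
  obtain ⟨m, y1, y2, y3, hy⟩ := exists_isRep3 k y
  rw [ht x y x1 x2 x3 y1 y2 y3 hx hy]
  have e1 := congr($h1 (comul x) (comul y))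
  simp only [LinearMap.compl₁₂_apply] at e1
  simp only [IsRep3, Δ3, LinearMap.comp_apply] at hx hy
  rw [smulConv, LinearMap.compl₁₂_apply, e1, ← coassoc_apply, ← coassoc_apply, hx, hy]
  simp [mul_smul, Finset.sum_comm (γ := Fin m)]

/-- `χ⁻¹ * (u ∘ •) = (u ∘ m) * χ⁻¹`, where `•` is the twisted product and `m` that of `H`. -/
lemma smulConv_twisted {χ χi : H →ₗ[k] H →ₗ[k] k} (hχ : DrinfeldCocycle k H χ χi)
    {tmul : H →ₗ[k] H →ₗ[k] H} (ht : IsTwistedMul k H χ χi tmul) (u : H →ₗ[k] V) :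
    smulConv χi (tmul.compr₂ u) = smulConvRight ((LinearMap.mul k H).compr₂ u) χi := by
  rw [ht.eq_smulConv, smulConv_compr₂, smulConvRight_compr₂, hχ.smulConv_inv_cancel]

/-- When two further legs are split off to the right of a linear map `d` on `H`, these two
legs are the coproduct of a single one. -/
lemma assoc_rTensor_rTensor_comul (d : H →ₗ[k] M) (x : H) :
    TensorProduct.assoc k M H H (((d.rTensor H ∘ₗ comul).rTensor H) (comul x))
      = (comul.lTensor M) (d.rTensor H (comul x)) := by
  have h : (TensorProduct.assoc k M H H).toLinearMap ∘ₗ (d.rTensor H).rTensor H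
      = d.rTensor (H ⊗[k] H) ∘ₗ (TensorProduct.assoc k H H H).toLinearMap := by
    ext; simp
  have h' : (comul (R := k) (A := H)).lTensor M ∘ₗ d.rTensor H
      = d.rTensor (H ⊗[k] H) ∘ₗ comul.lTensor H := by
    rw [LinearMap.lTensor_comp_rTensor, LinearMap.rTensor_comp_lTensor]
  have e := congr($h (comul.rTensor H (comul x)))
  have e' := congr($h' (comul x))
  simp only [LinearMap.comp_apply, LinearEquiv.coe_coe, coassoc_apply] at e e'
  rw [LinearMap.rTensor_comp_apply, e, e']

lemma assoc_Δ5 (x : H) :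
    TensorProduct.assoc k _ H H (Δ5 k H x) = comul.lTensor _ (Δ4 k H x) :=
  assoc_rTensor_rTensor_comul (Δ3 k H) x

lemma assoc_Δ4 (x : H) :
    TensorProduct.assoc k (H ⊗[k] H) H H (Δ4 k H x) = comul.lTensor (H ⊗[k] H) (Δ3 k H x) :=
  assoc_rTensor_rTensor_comul (comul (R := k) (A := H)) x

variable {B : Type*} [Ring B] [Algebra k B]

/-- The bilinear map `((a ⊗ b) ⊗ c, d ⊗ e) ↦ u⁻¹(a)(b ▷ u⁻¹(d))σ(c, e)`. -/
def gaugeFactor (act : H →ₗ[k] B →ₗ[k] B) (σ : H →ₗ[k] H →ₗ[k] B) (ui : H →ₗ[k] B) :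
    (H ⊗[k] H) ⊗[k] H →ₗ[k] H ⊗[k] H →ₗ[k] B :=
  (TensorProduct.map₂ (TensorProduct.lift (LinearMap.mk₂ k
    (fun a b => LinearMap.mulLeft k (ui a) ∘ₗ act b ∘ₗ ui)
    (by intros; ext; simp [add_mul]) (by intros; ext; simp)
    (by intros; ext; simp [mul_add]) (by intros; ext; simp))) σ).compr₂ (LinearMap.mul' k B)

@[simp] lemma gaugeFactor_tmul (act : H →ₗ[k] B →ₗ[k] B) (σ : H →ₗ[k] H →ₗ[k] B)
    (ui : H →ₗ[k] B) (a b c d e : H) :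
    gaugeFactor act σ ui ((a ⊗ₜ b) ⊗ₜ c) (d ⊗ₜ e) = ui a * act b (ui d) * σ c e := by
  simp [gaugeFactor]

/-- Two bilinear maps that agree on coproducts may be exchanged in the last two legs. -/
lemma map₂_congr_of_comul (F : M →ₗ[k] P →ₗ[k] W)
    {K L : H ⊗[k] H →ₗ[k] H ⊗[k] H →ₗ[k] V}
    (h : K.compl₁₂ comul comul = L.compl₁₂ comul comul) (s : M ⊗[k] H) (t : P ⊗[k] H) :
    TensorProduct.map₂ F K (comul.lTensor M s) (comul.lTensor P t)
      = TensorProduct.map₂ F L (comul.lTensor M s) (comul.lTensor P t) := by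
  have hmap : (TensorProduct.map₂ F K).compl₁₂ (comul.lTensor M) (comul.lTensor P)
      = (TensorProduct.map₂ F L).compl₁₂ (comul.lTensor M) (comul.lTensor P) := by
    ext m x p y
    simpa using congr(F m p ⊗ₜ[k] $h x y)
  exact congr($hmap s t)

end Helpers

section Statements

variable {k : Type*} [Field k]
variable {H : Type*} [Ring H] [HopfAlgebra k H]
variable {B : Type*} [Ring B] [Algebra k B]

/-- Cotwisting and gauge transformation commute: `(σ^u)_χ = (σ_χ)^u`. -/
theorem statement4 (act : H →ₗ[k] B →ₗ[k] B) (σ σi : H →ₗ[k] H →ₗ[k] B)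
    (hcd : CocycleDatum k H B act σ σi)
    (χ χi : H →ₗ[k] H →ₗ[k] k) (hχ : DrinfeldCocycle k H χ χi)
    (tmul : H →ₗ[k] H →ₗ[k] H) (htmul : IsTwistedMul k H χ χi tmul)
    (u ui : H →ₗ[k] B) (hu : ConvInv k H B u ui) (hu1 : u 1 = 1) :
    ∀ (h g : H) {n m : ℕ} (h1 h2 h3 h4 h5 : Fin n → H) (g1 g2 g3 g4 : Fin m → H),
      IsRep5 k H h h1 h2 h3 h4 h5 → IsRep4 k H g g1 g2 g3 g4 →
      -- σ^u(h₍₁₎,g₍₁₎)·χ⁻¹(h₍₂₎,g₍₂₎)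
      ∑ i, ∑ j, χi (h5 i) (g4 j)
          • (ui (h1 i) * act (h2 i) (ui (g1 j)) * σ (h3 i) (g2 j) * u (h4 i * g3 j))
      -- = u⁻¹(h₍₁₎)(h₍₂₎▷u⁻¹(g₍₁₎))·σ(h₍₃₎,g₍₂₎)χ⁻¹(h₍₄₎,g₍₃₎)·u(h₍₅₎•g₍₄₎)
      = ∑ i, ∑ j, χi (h4 i) (g3 j)
          • (ui (h1 i) * act (h2 i) (ui (g1 j)) * σ (h3 i) (g2 j)
              * u (tmul (h5 i) (g4 j))) := by
  intro h g n m h1 h2 h3 h4 h5 g1 g2 g3 g4 hh hg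
  have key := congr(LinearMap.mul' k B $(map₂_congr_of_comul (gaugeFactor act σ ui)
    (smulConv_twisted hχ htmul u) (Δ4 k H h) (Δ3 k H g)))
  rw [← assoc_Δ5, ← assoc_Δ4, hh, hg] at key
  simpa [Finset.sum_comm (γ := Fin m)] using key.symm

end Statements
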